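/- arXiv:2509.01191 — 2 statements merged into one kernel-verified Lean document; each statement's English description precedes it below -/
import Mathlib

section
/- Let A be a commutative ring and let Q be a commutative monoid with group of units Q^×. Let Q^+ = Q∖Q^× be the set of non-units of Q, and let I be the ideal of the monoid algebra A[Q] generated by the elements e^q with q ∈ Q^+. Then A[Q]/I is isomorphic as a ring to the monoid algebra A[Q^×]. -/
/-- Let `A` be a commutative ring, `Q` a commutative monoid, `Q^+` the set of non-units of `Q`,
and `I` the ideal of the monoid algebra `A[Q]` generated by the elements `e^q` with `q ∈ Q^+`.
Then `A[Q]/I` is isomorphic as a ring to the monoid algebra `A[Q^×]` over the submonoid of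
units of `Q`. -/
theorem monoidAlgebra_quotient_nonunits (A : Type*) [CommRing A] (Q : Type*) [CommMonoid Q]
    (I : Ideal (MonoidAlgebra A Q))
    (hI : I = Ideal.span ((fun q => MonoidAlgebra.of A Q q) '' {q : Q | ¬ IsUnit q})) :
    Nonempty ((MonoidAlgebra A Q ⧸ I) ≃+* MonoidAlgebra A (IsUnit.submonoid Q)) := by
  classical
  subst hI
  let φ : Q →* MonoidAlgebra A (IsUnit.submonoid Q) :=
    { toFun := fun q => if h : IsUnit q then MonoidAlgebra.of A (IsUnit.submonoid Q) ⟨q, h⟩ else 0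
      map_one' := by
        rw [dif_pos isUnit_one]
        exact map_one (MonoidAlgebra.of A (IsUnit.submonoid Q))
      map_mul' := by
        intro x y
        by_cases hx : IsUnit x
        · by_cases hy : IsUnit y
          · rw [dif_pos hx, dif_pos hy, dif_pos (hx.mul hy), ← map_mul]
            rfl
          · rw [dif_neg hy, dif_neg (fun h => hy (IsUnit.mul_iff.1 h).2), mul_zero]
        · rw [dif_neg hx, dif_neg (fun h => hx (IsUnit.mul_iff.1 h).1), zero_mul] }
  have φpos : ∀ q (h : IsUnit q), φ q = MonoidAlgebra.of A (IsUnit.submonoid Q) ⟨q, h⟩ :=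
    fun q h => dif_pos h
  have φneg : ∀ q, ¬ IsUnit q → φ q = 0 := fun q h => dif_neg h
  let J : Ideal (MonoidAlgebra A Q) :=
    Ideal.span ((fun q => MonoidAlgebra.of A Q q) '' {q : Q | ¬ IsUnit q})
  let F : MonoidAlgebra A Q →ₐ[A] MonoidAlgebra A (IsUnit.submonoid Q) :=
    MonoidAlgebra.lift A _ Q φ
  have hFof : ∀ q, F (MonoidAlgebra.of A Q q) = φ q := fun q => MonoidAlgebra.lift_of φ q
  have hF : ∀ a ∈ J, F a = 0 := by
    have : J ≤ RingHom.ker F := by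
      refine Ideal.span_le.2 ?_
      rintro _ ⟨q, hq, rfl⟩
      exact (hFof q).trans (φneg q hq)
    exact fun a ha => this ha
  let G : MonoidAlgebra A (IsUnit.submonoid Q) →ₐ[A] MonoidAlgebra A Q ⧸ J :=
    MonoidAlgebra.lift A _ _ (((Ideal.Quotient.mkₐ A J : _ →* _).comp (MonoidAlgebra.of A Q)).comp
      (IsUnit.submonoid Q).subtype)
  have hGof : ∀ u, G (MonoidAlgebra.of A _ u) =
      Ideal.Quotient.mkₐ A J (MonoidAlgebra.of A Q (u : Q)) := fun u => MonoidAlgebra.lift_of _ u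
  refine ⟨(AlgEquiv.ofAlgHom (Ideal.Quotient.liftₐ J F hF) G ?_ ?_).toRingEquiv⟩
  · refine MonoidAlgebra.algHom_ext' (MonoidHom.ext fun u => ?_) (Subsingleton.elim _ _)
    change Ideal.Quotient.liftₐ J F hF (G (MonoidAlgebra.of A _ u)) = MonoidAlgebra.of A _ u
    rw [hGof]
    exact (hFof u).trans (φpos u u.2)
  · refine Ideal.Quotient.algHom_ext A (MonoidAlgebra.algHom_ext' (MonoidHom.ext fun q => ?_)
      (Subsingleton.elim _ _))
    change G (F (MonoidAlgebra.of A Q q)) = Ideal.Quotient.mkₐ A J (MonoidAlgebra.of A Q q)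
    rw [hFof]
    by_cases hq : IsUnit q
    · rw [φpos q hq, hGof]
    · rw [φneg q hq, map_zero]
      have hm : MonoidAlgebra.of A Q q ∈ J := Ideal.subset_span ⟨q, hq, rfl⟩
      exact (Ideal.Quotient.eq_zero_iff_mem.2 hm).symm
end

section
/- Let A be a regular commutative Noetherian ring (i.e., the localization of A at every prime ideal is a regular local ring). Let Q be a finitely generated, cancellative, torsion-free, root closed commutative monoid, and let R = A[Q] be the monoid algebra. Let 𝔭 be a prime ideal of R, let P = {q ∈ Q : e^q ∈ 𝔭}, and let I be the ideal of the localization R_𝔭 generated by the images of the elements e^q with q ∈ P. Then the quotient R_𝔭/I is a regular local ring. -/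
/-- A commutative ring is a regular local ring if it is Noetherian local and its maximal ideal
can be generated by `n` elements, where `n` is its Krull dimension. -/
def IsRegularLocal (R : Type*) [CommRing R] : Prop :=
  IsNoetherianRing R ∧ ∃ h : IsLocalRing R, ∃ (n : ℕ) (s : Finset R),
    s.card = n ∧ Ideal.span (s : Set R) = @IsLocalRing.maximalIdeal R _ h ∧
      ringKrullDim R = n

open MonoidAlgebra in
/-- Localizing a monoid algebra along an inclusion of monoids which is a "localization". -/
theorem aux_isLocalization (A : Type*) [CommRing A] {M N : Type*} [CommMonoid M] [CommMonoid N]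
    (f : M →* N) (hf : Function.Injective f) (hu : ∀ m, IsUnit (f m))
    (hs : ∀ n : N, ∃ a b : M, n * f a = f b) [Algebra (MonoidAlgebra A M) (MonoidAlgebra A N)]
    (halg : algebraMap (MonoidAlgebra A M) (MonoidAlgebra A N) = mapDomainRingHom A f) :
    IsLocalization (MonoidHom.mrange (MonoidAlgebra.of A M)) (MonoidAlgebra A N) where
  map_units := by
    rintro ⟨_, m, rfl⟩
    have := (hu m).map (MonoidAlgebra.of A N)
    simpa [halg] using this
  surj := by
    intro z
    induction z using MonoidAlgebra.induction_linear with
    | zero => exact ⟨⟨0, 1⟩, by simp⟩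
    | add x y hx hy =>
      obtain ⟨⟨x', _, a, rfl⟩, hx⟩ := hx
      obtain ⟨⟨y', _, b, rfl⟩, hy⟩ := hy
      refine ⟨⟨x' * MonoidAlgebra.of A M b + y' * MonoidAlgebra.of A M a,
        ⟨_, a * b, rfl⟩⟩, ?_⟩
      dsimp only at hx hy ⊢
      rw [map_mul (MonoidAlgebra.of A M), map_mul, map_add, map_mul, map_mul, ← hx, ← hy]
      ring
    | single n r =>
      obtain ⟨a, b, h⟩ := hs n
      refine ⟨⟨single b r, ⟨_, a, rfl⟩⟩, ?_⟩
      simp [halg, h]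
  exists_of_eq := by
    intro x y h
    refine ⟨1, ?_⟩
    have : x = y := by
      apply mapDomain_injective (R := A) hf
      simpa [halg] using h
    rw [this]

theorem aux_regular_of_isLocalization {R S : Type*} [CommRing R] [CommRing S] [Algebra R S]
    (M : Submonoid R) [IsLocalization M S] [IsRegularRing R] : IsRegularRing S := by
  have := IsLocalization.isNoetherianRing M S inferInstance
  rw [isRegularRing_iff]
  intro p hp
  have := IsLocalization.isLocalization_isLocalization_atPrime_isLocalization M
    (Localization.AtPrime p) p
  exact IsRegularLocalRing.of_ringEquiv (IsLocalization.algEquiv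
    (p.comap (algebraMap R S)).primeCompl
    (Localization.AtPrime (p.comap (algebraMap R S))) (Localization.AtPrime p)).toRingEquiv

theorem aux_regular_laurent (A : Type*) [CommRing A] [IsRegularRing A] (n : ℕ) :
    IsRegularRing (MonoidAlgebra A (Multiplicative (Fin n →₀ ℤ))) := by
  have h1 : IsRegularRing (MonoidAlgebra A (Multiplicative (Fin n →₀ ℕ))) := by
    have : IsRegularRing (MvPolynomial (Fin n) A) := inferInstance
    exact IsRegularRing.of_ringEquiv (R := MvPolynomial (Fin n) A)
      (AddMonoidAlgebra.toMultiplicative A (Fin n →₀ ℕ))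
  let f : Multiplicative (Fin n →₀ ℕ) →* Multiplicative (Fin n →₀ ℤ) :=
    AddMonoidHom.toMultiplicative (Finsupp.mapRange.addMonoidHom (Nat.castAddMonoidHom ℤ))
  let : Algebra (MonoidAlgebra A (Multiplicative (Fin n →₀ ℕ)))
    (MonoidAlgebra A (Multiplicative (Fin n →₀ ℤ))) :=
      (MonoidAlgebra.mapDomainRingHom A f).toAlgebra
  have := aux_isLocalization A f (by
      intro x y h
      apply Multiplicative.toAdd.injective
      refine Finsupp.mapRange_injective (Nat.cast : ℕ → ℤ) (by simp) Nat.cast_injective ?_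
      exact Multiplicative.ofAdd.injective h) (fun m => Group.isUnit _) (by
      intro z
      refine ⟨Multiplicative.ofAdd ((Multiplicative.toAdd z).mapRange (fun t => (-t).toNat) (by simp)),
        Multiplicative.ofAdd ((Multiplicative.toAdd z).mapRange Int.toNat (by simp)), ?_⟩
      apply Multiplicative.toAdd.injective
      ext i
      simp [f]
      omega) rfl
  exact aux_regular_of_isLocalization 
    (MonoidHom.mrange (MonoidAlgebra.of A (Multiplicative (Fin n →₀ ℕ))))

theorem aux_regular_group (A : Type*) [CommRing A] [IsRegularRing A] (G : Type*) [CommGroup G]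
    [Monoid.FG G] [IsMulTorsionFree G] : IsRegularRing (MonoidAlgebra A G) := by
  have : Module.Finite ℤ (Additive G) := by
    rw [Module.Finite.iff_addGroup_fg]
    have : Group.FG G := Group.fg_iff_monoid_fg.2 inferInstance
    infer_instance
  have : Module.Free ℤ (Additive G) := inferInstance
  let e : Additive G ≃+ (Fin (Module.finrank ℤ (Additive G)) →₀ ℤ) :=
    (Module.finBasis ℤ (Additive G)).repr.toAddEquiv
  let e' : G ≃* Multiplicative (Fin (Module.finrank ℤ (Additive G)) →₀ ℤ) :=
    AddEquiv.toMultiplicativeRight e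
  have := aux_regular_laurent A (Module.finrank ℤ (Additive G))
  exact IsRegularRing.of_ringEquiv (MonoidAlgebra.mapDomainRingEquiv A e').symm

theorem aux_regular_iff (R : Type*) [CommRing R] :
    IsRegularLocal R ↔ IsRegularLocalRing R := by
  constructor
  · rintro ⟨h1, h2, n, s, hc, hs, hd⟩
    apply IsRegularLocalRing.of_spanFinrank_maximalIdeal_le
    rw [hd, ← hs, ← hc]
    have := Submodule.spanFinrank_span_le_ncard_of_finite (R := R) s.finite_toSet
    rw [Set.ncard_coe_finset] at this
    exact_mod_cast this
  · intro h
    have fg := (IsLocalRing.maximalIdeal R).fg_of_isNoetherianRing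
    have fin := Submodule.FG.finite_generators fg
    refine ⟨inferInstance, inferInstance, _, fin.toFinset, rfl, ?_, ?_⟩
    · rw [Set.Finite.coe_toFinset]
      exact (IsLocalRing.maximalIdeal R).span_generators
    · rw [← Set.ncard_eq_toFinset_card _ fin, Submodule.FG.generators_ncard fg,
        IsRegularLocalRing.spanFinrank_maximalIdeal]

theorem aux_main (A : Type*) [CommRing A]
    [IsNoetherianRing A]
    (hreg : ∀ (p : Ideal A) [p.IsPrime], IsRegularLocal (Localization.AtPrime p))
    (Q : Type*) [CommMonoid Q] [IsCancelMul Q] (hfg : Monoid.FG Q)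
    (htf : ∀ (n : ℕ), 0 < n → ∀ x y : Q, x ^ n = y ^ n → x = y)
    (hrc : ∀ (a b : Q) (n : ℕ), 0 < n → (∃ q : Q, a ^ n = b ^ n * q) → ∃ q' : Q, a = b * q')
    (𝔭 : Ideal (MonoidAlgebra A Q)) [𝔭.IsPrime]
    (I : Ideal (Localization.AtPrime 𝔭))
    (hI : I = Ideal.span (algebraMap (MonoidAlgebra A Q) (Localization.AtPrime 𝔭) ''
        ((fun q => MonoidAlgebra.of A Q q) '' {q : Q | MonoidAlgebra.of A Q q ∈ 𝔭})))
    (B : Type*) [CommRing B] (g : Localization.AtPrime 𝔭 →+* B) (hg : Function.Surjective g)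
    (hker : RingHom.ker g = I) :
    IsRegularLocal B := by
  classical
  have hA : IsRegularRing A :=
    isRegularRing_iff.2 fun p _ => (aux_regular_iff _).1 (hreg p)
  rw [aux_regular_iff]
  -- the face
  let F : Submonoid Q := 𝔭.primeCompl.comap (MonoidAlgebra.of A Q)
  have hF : ∀ q, q ∈ F ↔ MonoidAlgebra.of A Q q ∉ 𝔭 := fun q => Iff.rfl
  have hface : ∀ x y, x * y ∈ F ↔ x ∈ F ∧ y ∈ F := by
    intro x y
    refine ⟨fun h => ?_, fun h => F.mul_mem h.1 h.2⟩
    rw [hF, map_mul] at h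
    exact ⟨fun hx => h (𝔭.mul_mem_right _ hx), fun hy => h (𝔭.mul_mem_left _ hy)⟩
  -- finite generation of the face
  have hFfg : Monoid.FG F := by
    obtain ⟨S, hS⟩ := hfg.fg_top
    rw [Monoid.fg_iff_submonoid_fg]
    refine ⟨S.filter (· ∈ F), le_antisymm ?_ ?_⟩
    · rw [Submonoid.closure_le]
      intro x hx
      simpa using (Finset.mem_filter.1 hx).2
    · intro x hx
      have hx' : x ∈ Submonoid.closure (S : Set Q) := by rw [hS]; trivial
      induction hx' using Submonoid.closure_induction with
      | mem y hy => exact Submonoid.subset_closure (by simpa using ⟨hy, hx⟩)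
      | one => exact one_mem _
      | mul a b _ _ ha hb =>
        exact mul_mem (ha ((hface a b).1 hx).1) (hb ((hface a b).1 hx).2)
  have hFtf : IsMulTorsionFree F := ⟨fun n hn x y h => by
    apply Subtype.ext
    exact htf n (Nat.pos_of_ne_zero hn) _ _ (by simpa using congrArg Subtype.val h)⟩
  let G := Algebra.GrothendieckGroup F
  have hG : IsRegularRing (MonoidAlgebra A G) := aux_regular_group A G
  -- retraction
  let φ : Q →* MonoidAlgebra A F :=
    { toFun := fun q => if h : q ∈ F then MonoidAlgebra.of A F ⟨q, h⟩ else 0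
      map_one' := by
        rw [dif_pos F.one_mem]; exact map_one (MonoidAlgebra.of A F)
      map_mul' := by
        intro x y
        by_cases hx : x ∈ F
        · by_cases hy : y ∈ F
          · rw [dif_pos hx, dif_pos hy, dif_pos (F.mul_mem hx hy), ← map_mul]; rfl
          · rw [dif_neg hy, mul_zero, dif_neg (fun h => hy ((hface x y).1 h).2)]
        · rw [dif_neg hx, zero_mul, dif_neg (fun h => hx ((hface x y).1 h).1)] }
  let π : MonoidAlgebra A Q →+* MonoidAlgebra A F :=
    (MonoidAlgebra.lift A (MonoidAlgebra A F) Q φ).toRingHom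
  have hπ : ∀ q r, π (MonoidAlgebra.single q r) = r • φ q := fun q r =>
    MonoidAlgebra.lift_single _ _ _
  have hφ : ∀ q (h : q ∈ F), φ q = MonoidAlgebra.single ⟨q, h⟩ 1 := fun q h => dif_pos h
  have hφ' : ∀ q (h : q ∉ F), φ q = 0 := fun q h => dif_neg h
  let ι : MonoidAlgebra A F →+* MonoidAlgebra A Q := MonoidAlgebra.mapDomainRingHom A F.subtype
  have hι : ∀ q r, ι (MonoidAlgebra.single q r) = MonoidAlgebra.single (q : Q) r := fun q r =>
    MonoidAlgebra.mapDomain_single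
  have hπι : ∀ x, π (ι x) = x := by
    intro x
    induction x using MonoidAlgebra.induction_linear with
    | zero => simp
    | add x y hx hy => rw [map_add, map_add, hx, hy]
    | single q r => rw [hι, hπ, hφ q q.2]; simp
  set J : Ideal (MonoidAlgebra A Q) := Ideal.span
    ((fun q => MonoidAlgebra.of A Q q) '' {q : Q | MonoidAlgebra.of A Q q ∈ 𝔭}) with hJ
  have hIJ : I = J.map (algebraMap _ (Localization.AtPrime 𝔭)) := by
    rw [hI, hJ, Ideal.map_span]
  have hιπ : ∀ x, x - ι (π x) ∈ J := by
    intro x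
    induction x using MonoidAlgebra.induction_linear with
    | zero => simp
    | add x y hx hy =>
      rw [map_add, map_add, add_sub_add_comm]; exact J.add_mem hx hy
    | single q r =>
      rw [hπ]
      by_cases h : q ∈ F
      · rw [hφ q h]; simp [hι]
      · rw [hφ' q h, smul_zero, map_zero, sub_zero]
        have h1 : MonoidAlgebra.of A Q q ∈ J :=
          Ideal.subset_span ⟨q, not_not.1 h, rfl⟩
        have h2 := J.mul_mem_left (MonoidAlgebra.single 1 r) h1
        simpa using h2
  let algFB : Algebra (MonoidAlgebra A F) B :=
    ((g.comp (algebraMap (MonoidAlgebra A Q) (Localization.AtPrime 𝔭))).comp ι).toAlgebra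
  have hloc : IsLocalization (𝔭.primeCompl.map π) B := by
    refine IsLocalization.of_surjective (S := Localization.AtPrime 𝔭) 𝔭.primeCompl π
      (fun x => ⟨ι x, hπι x⟩) g hg ?_ ?_
    · refine RingHom.ext fun x => ?_
      change g (algebraMap _ _ x) = g (algebraMap _ _ (ι (π x)))
      rw [← sub_eq_zero, ← map_sub, ← map_sub]
      rw [← RingHom.mem_ker, hker, hIJ]
      exact Ideal.mem_map_of_mem _ (hιπ x)
    · rw [hker, hIJ]
      refine Ideal.map_mono ?_
      rw [hJ, Ideal.span_le]
      rintro _ ⟨q, hq, rfl⟩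
      have : φ q = 0 := hφ' q (fun h => h hq)
      change π (MonoidAlgebra.single q 1) = 0
      rw [hπ, this, smul_zero]
  -- group completion
  let γ : F →* G := Algebra.GrothendieckGroup.of
  let algFG : Algebra (MonoidAlgebra A F) (MonoidAlgebra A G) :=
    (MonoidAlgebra.mapDomainRingHom A γ).toAlgebra
  have hlocG : IsLocalization (MonoidHom.mrange (MonoidAlgebra.of A F)) (MonoidAlgebra A G) :=
    aux_isLocalization A γ Algebra.GrothendieckGroup.of_injective (fun _ => Group.isUnit _)
      (fun n => by
        obtain ⟨⟨b, a⟩, h⟩ := (Localization.monoidOf (⊤ : Submonoid F)).surj n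
        exact ⟨a, b, h⟩) rfl
  have hle : MonoidHom.mrange (MonoidAlgebra.of A F) ≤ 𝔭.primeCompl.map π := by
    rintro _ ⟨q, rfl⟩
    refine ⟨MonoidAlgebra.of A Q q, q.2, ?_⟩
    change π (MonoidAlgebra.single (q : Q) 1) = _
    rw [hπ, hφ q q.2]; simp
  let ψ : MonoidAlgebra A G →+* B :=
    IsLocalization.lift (M := MonoidHom.mrange (MonoidAlgebra.of A F))
      (g := algebraMap (MonoidAlgebra A F) B)
      (fun y => IsLocalization.map_units (M := 𝔭.primeCompl.map π) _ ⟨y, hle y.2⟩)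
  let : Algebra (MonoidAlgebra A G) B := ψ.toAlgebra
  have : IsScalarTower (MonoidAlgebra A F) (MonoidAlgebra A G) B :=
    IsScalarTower.of_algebraMap_eq fun x => (IsLocalization.lift_eq _ x).symm
  have hfin := IsLocalization.isLocalization_of_submonoid_le (MonoidAlgebra A G)
    B _ _ hle
  have hBreg : IsRegularRing B :=
    aux_regular_of_isLocalization
      ((𝔭.primeCompl.map π).map (algebraMap (MonoidAlgebra A F) (MonoidAlgebra A G)))
  have hIne : I ≠ ⊤ := by
    refine ne_top_of_le_ne_top (IsLocalRing.maximalIdeal.isMaximal _).ne_top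
      (?_ : I ≤ IsLocalRing.maximalIdeal (Localization.AtPrime 𝔭))
    rw [hIJ, ← Localization.AtPrime.map_eq_maximalIdeal]
    refine Ideal.map_mono ?_
    rw [hJ, Ideal.span_le]
    rintro _ ⟨q, hq, rfl⟩
    exact hq
  have : Nontrivial B := by
    rw [← hker] at hIne
    by_contra hB
    rw [not_nontrivial_iff_subsingleton] at hB
    exact hIne (RingHom.ker_eq_top_of_subsingleton g)
  have : IsLocalRing B :=
    IsLocalRing.of_surjective' g hg
  exact IsRegularLocalRing.of_isRegularRing_of_isLocalRing _

/-- Let `A` be a regular commutative Noetherian ring, `Q` a finitely generated, cancellative,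
torsion-free, root closed commutative monoid, and `R = A[Q]` the monoid algebra. Let `𝔭` be a
prime ideal of `R`, `P = {q : e^q ∈ 𝔭}`, and `I` the ideal of `R_𝔭` generated by the images of
the `e^q` with `q ∈ P`. Then `R_𝔭 / I` is a regular local ring. -/
theorem monoidAlgebra_localization_quotient_regular (A : Type*) [CommRing A]
    [IsNoetherianRing A]
    (hreg : ∀ (p : Ideal A) [p.IsPrime], IsRegularLocal (Localization.AtPrime p))
    (Q : Type*) [CommMonoid Q] [IsCancelMul Q] (hfg : Monoid.FG Q)
    (htf : ∀ (n : ℕ), 0 < n → ∀ x y : Q, x ^ n = y ^ n → x = y)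
    (hrc : ∀ (a b : Q) (n : ℕ), 0 < n → (∃ q : Q, a ^ n = b ^ n * q) → ∃ q' : Q, a = b * q')
    (𝔭 : Ideal (MonoidAlgebra A Q)) [𝔭.IsPrime]
    (I : Ideal (Localization.AtPrime 𝔭))
    (hI : I = Ideal.span (algebraMap (MonoidAlgebra A Q) (Localization.AtPrime 𝔭) ''
        ((fun q => MonoidAlgebra.of A Q q) '' {q : Q | MonoidAlgebra.of A Q q ∈ 𝔭}))) :
    IsRegularLocal (Localization.AtPrime 𝔭 ⧸ I) := by
  exact aux_main A hreg Q hfg htf hrc 𝔭 I hI _ (Ideal.Quotient.mk I)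
    Ideal.Quotient.mk_surjective Ideal.mk_ker
end
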